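/- arXiv:2603.26061 — 2 statements merged into one kernel-verified Lean document; each statement's English description precedes it below -/
import Mathlib

section
/- Let φ be an N-function with Fenchel conjugate φ* such that t ↦ φ'(t)/t is non-decreasing on (0,∞). Then the boundedness 0 < c_φ := lim_{t↘0} φ'(t)/t ≤ lim_{T→∞} φ'(T)/T =: C_φ < ∞ holds if and only if 0 < C_φ⁻¹ = lim_{T→∞} (φ*)'(T)/T ≤ lim_{t↘0} (φ*)'(t)/t = c_φ⁻¹ < ∞; in particular, under these conditions C_φ⁻¹ ≤ (φ*)'(s)/s ≤ c_φ⁻¹ for all s > 0. -/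
open Filter MeasureTheory Set Topology

noncomputable section

/-- `φ : [0,∞) → [0,∞)` is an N-function with right-continuous non-decreasing
derivative `φ'`. -/
structure IsNFunction (φ φ' : ℝ → ℝ) : Prop where
  continuousOn : ContinuousOn φ (Set.Ici 0)
  convexOn : ConvexOn ℝ (Set.Ici 0) φ
  deriv_nonneg : ∀ t : ℝ, 0 ≤ t → 0 ≤ φ' t
  deriv_monotoneOn : MonotoneOn φ' (Set.Ici 0)
  deriv_rightContinuous : ∀ t : ℝ, 0 ≤ t →
    Filter.Tendsto φ' (nhdsWithin t (Set.Ioi t)) (nhds (φ' t))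
  deriv_zero : φ' 0 = 0
  deriv_pos : ∀ t : ℝ, 0 < t → 0 < φ' t
  deriv_tendsto_atTop : Filter.Tendsto φ' Filter.atTop Filter.atTop
  eq_integral : ∀ t : ℝ, 0 ≤ t → φ t = ∫ s in (0:ℝ)..t, φ' s

/-- Fenchel conjugate `φ*(r) = sup_{s ≥ 0} (r s − φ(s))`. -/
def fenchelConj (φ : ℝ → ℝ) (r : ℝ) : ℝ :=
  sSup {x : ℝ | ∃ s : ℝ, 0 ≤ s ∧ x = r * s - φ s}

/-- Right-continuous inverse `(φ')⁻¹(t) = sup {r ≥ 0 : φ'(r) ≤ t}`. -/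
def rcInv (φ' : ℝ → ℝ) (t : ℝ) : ℝ :=
  sSup {r : ℝ | 0 ≤ r ∧ φ' r ≤ t}

/-!
Monotonicity of `f t / t` says that `f x ≤ (x / y) * f y` for `0 < x ≤ y`. Hence a positive such
`f` is strictly increasing, tends to `0` at `0⁺` and to `∞` at `∞`, and its generalized inverse
`g` satisfies `g (f t) / f t = (f t / t)⁻¹`; moreover `s ↦ g s / s` is non-increasing.
`f` may skip values at its jumps, but a monotone function has the same limit along any path
reaching the endpoint, so the limits of `g s / s` can be computed along `s = f t`.
-/

section MonotoneLimits

variable {α β γ : Type*} [LinearOrder β] [TopologicalSpace β] [OrderTopology β]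
  {F : Filter α} {G : Filter γ} [G.NeBot] {g : α → β} {u : γ → α} {l : β}

theorem tendsto_comp_iff_of_eventually_le (hg : ∀ᶠ x in F, ∀ᶠ y in F, g y ≤ g x)
    (hu : Tendsto u G F) : Tendsto (g ∘ u) G (𝓝 l) ↔ Tendsto g F (𝓝 l) := by
  refine ⟨fun h => tendsto_order.2 ⟨fun a ha => ?_, fun b hb => ?_⟩, fun h => h.comp hu⟩
  · filter_upwards [hg] with x hx
    exact ha.trans_le (le_of_tendsto h (hu.eventually hx))
  · obtain ⟨t, htb, ht⟩ := ((h.eventually_lt_const hb).and (hu.eventually hg)).exists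
    exact ht.mono fun y hy => hy.trans_lt htb

theorem tendsto_comp_iff_of_eventually_ge (hg : ∀ᶠ x in F, ∀ᶠ y in F, g x ≤ g y)
    (hu : Tendsto u G F) : Tendsto (g ∘ u) G (𝓝 l) ↔ Tendsto g F (𝓝 l) :=
  tendsto_comp_iff_of_eventually_le (β := βᵒᵈ) hg hu

end MonotoneLimits

section MonotoneBounds

variable {α β : Type*} [LinearOrder α] [NoMaxOrder α] [DenselyOrdered α] [TopologicalSpace α]
  [OrderTopology α] [Preorder β] [TopologicalSpace β] [OrderClosedTopology β]
  {g : α → β} {a x : α} {l L : β}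

theorem mem_Icc_of_monotoneOn_Ioi_of_tendsto (hg : MonotoneOn g (Ioi a))
    (hl : Tendsto g (𝓝[>] a) (𝓝 l)) (hL : Tendsto g atTop (𝓝 L)) (hx : a < x) :
    g x ∈ Icc l L := by
  have : Nonempty α := ⟨a⟩
  constructor
  · refine le_of_tendsto hl ?_
    filter_upwards [Ioc_mem_nhdsGT hx] with y hy using hg hy.1 hx hy.2
  · refine ge_of_tendsto hL ?_
    filter_upwards [eventually_ge_atTop x] with y hy using hg hx (hx.trans_le hy) hy

theorem mem_Icc_of_antitoneOn_Ioi_of_tendsto (hg : AntitoneOn g (Ioi a))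
    (hl : Tendsto g (𝓝[>] a) (𝓝 l)) (hL : Tendsto g atTop (𝓝 L)) (hx : a < x) :
    g x ∈ Icc L l :=
  (mem_Icc_of_monotoneOn_Ioi_of_tendsto (β := βᵒᵈ) hg hl hL hx).symm

theorem limit_le_limit_of_monotoneOn_Ioi (hg : MonotoneOn g (Ioi a))
    (hl : Tendsto g (𝓝[>] a) (𝓝 l)) (hL : Tendsto g atTop (𝓝 L)) : l ≤ L := by
  obtain ⟨x, hx⟩ := exists_gt a
  exact nonempty_Icc.1 ⟨g x, mem_Icc_of_monotoneOn_Ioi_of_tendsto hg hl hL hx⟩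

theorem limit_le_limit_of_antitoneOn_Ioi (hg : AntitoneOn g (Ioi a))
    (hl : Tendsto g (𝓝[>] a) (𝓝 l)) (hL : Tendsto g atTop (𝓝 L)) : L ≤ l :=
  limit_le_limit_of_monotoneOn_Ioi (β := βᵒᵈ) hg hl hL

end MonotoneBounds

section MonotoneQuotient

variable {f : ℝ → ℝ}

theorem le_div_mul_of_monotoneOn_div (hmono : MonotoneOn (fun t => f t / t) (Ioi 0)) {x y : ℝ}
    (hx : 0 < x) (hxy : x ≤ y) : f x ≤ x / y * f y := by
  have hquot : f x / x ≤ f y / y := hmono hx (hx.trans_le hxy) hxy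
  calc f x ≤ f y / y * x := (div_le_iff₀ hx).1 hquot
    _ = x / y * f y := by ring

theorem strictMonoOn_of_monotoneOn_div (hpos : ∀ t, 0 < t → 0 < f t)
    (hmono : MonotoneOn (fun t => f t / t) (Ioi 0)) : StrictMonoOn f (Ioi 0) := by
  intro x hx y hy hxy
  calc f x ≤ x / y * f y := le_div_mul_of_monotoneOn_div hmono hx hxy.le
    _ < f y := mul_lt_of_lt_one_left (hpos y hy) ((div_lt_one hy).2 hxy)

theorem tendsto_atTop_of_monotoneOn_div (hone : 0 < f 1)
    (hmono : MonotoneOn (fun t => f t / t) (Ioi 0)) : Tendsto f atTop atTop := by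
  refine tendsto_atTop_mono' atTop ?_ (tendsto_id.atTop_mul_const hone)
  filter_upwards [eventually_ge_atTop 1] with T hT
  have hle : f 1 ≤ 1 / T * f T := le_div_mul_of_monotoneOn_div hmono one_pos hT
  rwa [one_div_mul_eq_div, le_div_iff₀' (one_pos.trans_le hT)] at hle

theorem tendsto_nhdsGT_zero_of_monotoneOn_div (hpos : ∀ t, 0 < t → 0 < f t)
    (hmono : MonotoneOn (fun t => f t / t) (Ioi 0)) : Tendsto f (𝓝[>] 0) (𝓝[>] 0) := by
  refine tendsto_nhdsWithin_iff.2 ⟨?_, eventually_mem_nhdsWithin.mono hpos⟩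
  have hlin : Tendsto (fun t : ℝ => t * f 1) (𝓝[>] 0) (𝓝 0) := by
    simpa using ((continuous_mul_const (f 1)).tendsto 0).mono_left nhdsWithin_le_nhds
  refine squeeze_zero' (eventually_mem_nhdsWithin.mono fun t ht => (hpos t ht).le) ?_ hlin
  filter_upwards [Ioc_mem_nhdsGT one_pos] with t ht
  simpa using le_div_mul_of_monotoneOn_div hmono ht.1 ht.2

end MonotoneQuotient

section GeneralizedInverse

variable {f : ℝ → ℝ}

theorem le_rcInv (hf : Tendsto f atTop atTop) {r s : ℝ} (hr : 0 ≤ r) (hrs : f r ≤ s) :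
    r ≤ rcInv f s := by
  obtain ⟨M, hM⟩ := (hf.eventually_gt_atTop s).exists_forall_of_atTop
  have hbdd : BddAbove {r : ℝ | 0 ≤ r ∧ f r ≤ s} :=
    ⟨M, fun x hx => le_of_not_ge fun hMx => (hM x hMx).not_ge hx.2⟩
  exact le_csSup hbdd ⟨hr, hrs⟩

theorem rcInv_le {s b : ℝ} (hb : 0 ≤ b) (h : ∀ r, 0 < r → f r ≤ s → r ≤ b) : rcInv f s ≤ b :=
  Real.sSup_le (fun r hr => hr.1.eq_or_lt.elim (fun h0 => h0 ▸ hb) fun h0 => h r h0 hr.2) hb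

theorem rcInv_apply_of_strictMonoOn (hf : StrictMonoOn f (Ioi 0)) {t : ℝ} (ht : 0 < t) :
    rcInv f (f t) = t := by
  refine IsGreatest.csSup_eq ⟨⟨ht.le, le_rfl⟩, fun r hr => ?_⟩
  rcases hr.1.eq_or_lt with rfl | hr0
  · exact ht.le
  · exact (hf.le_iff_le hr0 ht).1 hr.2

theorem rcInv_nonneg (f : ℝ → ℝ) (s : ℝ) : 0 ≤ rcInv f s :=
  Real.sSup_nonneg fun _ hr => hr.1

theorem antitoneOn_rcInv_div (hone : 0 < f 1)
    (hmono : MonotoneOn (fun t => f t / t) (Ioi 0)) :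
    AntitoneOn (fun s => rcInv f s / s) (Ioi 0) := by
  intro s (hs : 0 < s) S (hS : 0 < S) hsS
  have hrescale : ∀ r, 0 < r → f r ≤ S → s / S * r ≤ rcInv f s := fun r hr hrS => by
    refine le_rcInv (tendsto_atTop_of_monotoneOn_div hone hmono) (by positivity) ?_
    have hle : s / S * r ≤ r := mul_le_of_le_one_left hr.le ((div_le_one hS).2 hsS)
    calc f (s / S * r) ≤ s / S * r / r * f r :=
          le_div_mul_of_monotoneOn_div hmono (by positivity) hle
      _ = s / S * f r := by rw [mul_div_cancel_right₀ _ hr.ne']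
      _ ≤ s / S * S := by gcongr
      _ = s := div_mul_cancel₀ s hS.ne'
  have hnonneg := rcInv_nonneg f s
  refine (div_le_iff₀ hS).2 (rcInv_le (by positivity) fun r hr hrS => ?_)
  calc r = s / S * r * S / s := by field_simp
    _ ≤ rcInv f s * S / s := by gcongr; exact hrescale r hr hrS
    _ = rcInv f s / s * S := by ring

theorem rcInv_apply_div_apply (hf : StrictMonoOn f (Ioi 0)) {t : ℝ} (ht : 0 < t) :
    rcInv f (f t) / f t = (f t / t)⁻¹ := by
  rw [rcInv_apply_of_strictMonoOn hf ht, inv_div]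

theorem tendsto_rcInv_div_atTop_iff (hpos : ∀ t, 0 < t → 0 < f t)
    (hmono : MonotoneOn (fun t => f t / t) (Ioi 0)) {C : ℝ} (hC : C ≠ 0) :
    Tendsto (fun T => rcInv f T / T) atTop (𝓝 C⁻¹) ↔
      Tendsto (fun T => f T / T) atTop (𝓝 C) := by
  have hanti := antitoneOn_rcInv_div (hpos 1 one_pos) hmono
  have hlim := tendsto_atTop_of_monotoneOn_div (hpos 1 one_pos) hmono
  rw [← tendsto_inv_iff₀ hC, ← tendsto_comp_iff_of_eventually_le ?_ hlim]
  · refine tendsto_congr' ?_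
    filter_upwards [eventually_gt_atTop 0] with t ht
    exact rcInv_apply_div_apply (strictMonoOn_of_monotoneOn_div hpos hmono) ht
  · filter_upwards [eventually_gt_atTop 0] with x hx
    filter_upwards [eventually_ge_atTop x] with y hy using hanti hx (hx.trans_le hy) hy

theorem tendsto_rcInv_div_nhdsGT_zero_iff (hpos : ∀ t, 0 < t → 0 < f t)
    (hmono : MonotoneOn (fun t => f t / t) (Ioi 0)) {c : ℝ} (hc : c ≠ 0) :
    Tendsto (fun t => rcInv f t / t) (𝓝[>] 0) (𝓝 c⁻¹) ↔
      Tendsto (fun t => f t / t) (𝓝[>] 0) (𝓝 c) := by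
  have hanti := antitoneOn_rcInv_div (hpos 1 one_pos) hmono
  have hlim := tendsto_nhdsGT_zero_of_monotoneOn_div hpos hmono
  rw [← tendsto_inv_iff₀ hc, ← tendsto_comp_iff_of_eventually_ge ?_ hlim]
  · refine tendsto_congr' ?_
    filter_upwards [self_mem_nhdsWithin] with t ht
    exact rcInv_apply_div_apply (strictMonoOn_of_monotoneOn_div hpos hmono) ht
  · filter_upwards [self_mem_nhdsWithin] with x hx
    filter_upwards [Ioc_mem_nhdsGT hx] with y hy using hanti hy.1 hx hy.2

end GeneralizedInverse

theorem boundedness_iff_dual_boundedness_general (f : ℝ → ℝ) (hpos : ∀ t, 0 < t → 0 < f t)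
    (hmono : MonotoneOn (fun t => f t / t) (Ioi 0)) (c C : ℝ) :
    ((0 < c ∧ Tendsto (fun t => f t / t) (𝓝[>] 0) (𝓝 c) ∧
        Tendsto (fun T => f T / T) atTop (𝓝 C)) ↔
      (0 < C⁻¹ ∧ Tendsto (fun T => rcInv f T / T) atTop (𝓝 C⁻¹) ∧
        Tendsto (fun t => rcInv f t / t) (𝓝[>] 0) (𝓝 c⁻¹))) ∧
    ((0 < c ∧ Tendsto (fun t => f t / t) (𝓝[>] 0) (𝓝 c) ∧
        Tendsto (fun T => f T / T) atTop (𝓝 C)) →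
      ∀ s, 0 < s → C⁻¹ ≤ rcInv f s / s ∧ rcInv f s / s ≤ c⁻¹) := by
  have hanti := antitoneOn_rcInv_div (hpos 1 one_pos) hmono
  have htop_iff {C : ℝ} (hC : 0 < C) := tendsto_rcInv_div_atTop_iff hpos hmono hC.ne'
  have hzero_iff {c : ℝ} (hc : 0 < c) := tendsto_rcInv_div_nhdsGT_zero_iff hpos hmono hc.ne'
  refine ⟨⟨?_, ?_⟩, ?_⟩
  · rintro ⟨hc, hzero, htop⟩
    have hC : 0 < C := hc.trans_le (limit_le_limit_of_monotoneOn_Ioi hmono hzero htop)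
    exact ⟨inv_pos.2 hC, (htop_iff hC).2 htop, (hzero_iff hc).2 hzero⟩
  · rintro ⟨hC, htop, hzero⟩
    have hc : 0 < c⁻¹ := hC.trans_le (limit_le_limit_of_antitoneOn_Ioi hanti hzero htop)
    rw [inv_pos] at hc hC
    exact ⟨hc, (hzero_iff hc).1 hzero, (htop_iff hC).1 htop⟩
  · rintro ⟨hc, hzero, htop⟩ s hs
    have hC : 0 < C := hc.trans_le (limit_le_limit_of_monotoneOn_Ioi hmono hzero htop)
    have hbounds := mem_Icc_of_antitoneOn_Ioi_of_tendsto hanti ((hzero_iff hc).2 hzero)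
      ((htop_iff hC).2 htop) hs
    exact hbounds

/-- under non-decreasing `φ'(t)/t`, the boundedness
`0 < c_φ = lim_{t↘0} φ'(t)/t ≤ lim_{T→∞} φ'(T)/T = C_φ < ∞` holds iff
`0 < C_φ⁻¹ = lim_{T→∞} (φ*)'(T)/T ≤ lim_{t↘0} (φ*)'(t)/t = c_φ⁻¹ < ∞`;
in particular `C_φ⁻¹ ≤ (φ*)'(s)/s ≤ c_φ⁻¹` for all `s > 0`. -/
theorem boundedness_iff_dual_boundedness (φ φ' : ℝ → ℝ) (hφ : IsNFunction φ φ')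
    (hmono : ∀ t T : ℝ, 0 < t → t ≤ T → φ' t / t ≤ φ' T / T) (c C : ℝ) :
    ((0 < c ∧ Tendsto (fun t : ℝ => φ' t / t) (nhdsWithin 0 (Set.Ioi 0)) (nhds c) ∧
        Tendsto (fun T : ℝ => φ' T / T) atTop (nhds C)) ↔
      (0 < C⁻¹ ∧ Tendsto (fun T : ℝ => rcInv φ' T / T) atTop (nhds C⁻¹) ∧
        Tendsto (fun t : ℝ => rcInv φ' t / t) (nhdsWithin 0 (Set.Ioi 0)) (nhds c⁻¹))) ∧
    ((0 < c ∧ Tendsto (fun t : ℝ => φ' t / t) (nhdsWithin 0 (Set.Ioi 0)) (nhds c) ∧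
        Tendsto (fun T : ℝ => φ' T / T) atTop (nhds C)) →
      ∀ s : ℝ, 0 < s → C⁻¹ ≤ rcInv φ' s / s ∧ rcInv φ' s / s ≤ c⁻¹) :=
  boundedness_iff_dual_boundedness_general φ' hφ.deriv_pos
    (fun t ht T _ htT => hmono t T ht htT) c C
end
end

section
/- Let φ be a uniformly convex N-function with uniform convexity constants 0 < c₁ ≤ C₁ such that t ↦ φ'(t)/t is non-decreasing on (0,∞) and bounded with 0 < c_φ := lim_{t↘0} φ'(t)/t ≤ lim_{T→∞} φ'(T)/T =: C_φ < ∞. Let B: ℝᴺ → ℝᴹ be linear, V₀ ⊆ ℝᴺ with ker(B) ∩ V₀ = {0}, g, f ∈ ℝᴺ, w ∈ (0,∞)ᴹ. Let u_g minimize J over g + V₀, σ minimize J* over Σ_f, and let σⁿ ∈ Σ_f, σⁿ⁺¹ ∈ Σ_f, uⁿ⁺¹ ∈ V₀ satisfy the dual IRLS saddle-point system: Σ_α ((φ*)'(w_α⁻¹|σⁿ_α|)/|σⁿ_α|)·σⁿ⁺¹_α τ_α − τᵀB(uⁿ⁺¹+g) = 0 for all τ ∈ ℝᴹ, and (σⁿ⁺¹)ᵀBv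 = f·v for all v ∈ V₀. Then with u_g^{n+1} := uⁿ⁺¹ + g there exists a constant C < ∞ depending only on c₁ and C₁ such that J(u_g^{n+1}) − J(u_g) ≤ C · (C_φ/c_φ) · (J*(σⁿ) − J*(σ)). -/
open Filter MeasureTheory Set Topology

noncomputable section

/-- `A_ψ(t) = (ψ(|t|)/|t|)·t` for `t ≠ 0` and `A_ψ(0) = 0`. -/
def Aphi (ψ : ℝ → ℝ) (t : ℝ) : ℝ := if t = 0 then 0 else ψ (|t|) / |t| * t

/-- `V_ψ(t) = sqrt(ψ(|t|)/|t|)·t` for `t ≠ 0` and `V_ψ(0) = 0`. -/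
def Vphi (ψ : ℝ → ℝ) (t : ℝ) : ℝ := if t = 0 then 0 else Real.sqrt (ψ (|t|) / |t|) * t

/-- Primal energy `J(v) = Σ_α w_α φ(|(Bv)_α|) − f·v`. -/
def primalJ {N M : ℕ} (w : Fin M → ℝ) (φ : ℝ → ℝ)
    (B : (Fin N → ℝ) →ₗ[ℝ] (Fin M → ℝ)) (f v : Fin N → ℝ) : ℝ :=
  (∑ α, w α * φ (|B v α|)) - ∑ i, f i * v i

/-- Dual energy `J*(τ) = Σ_α w_α ψ(w_α⁻¹|τ_α|) − τᵀ(Bg)` with dual integrand `ψ`. -/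
def dualJ {N M : ℕ} (w : Fin M → ℝ) (ψ : ℝ → ℝ)
    (B : (Fin N → ℝ) →ₗ[ℝ] (Fin M → ℝ)) (g : Fin N → ℝ) (τ : Fin M → ℝ) : ℝ :=
  (∑ α, w α * ψ ((w α)⁻¹ * |τ α|)) - ∑ α, τ α * B g α

/-- Dual constraint set `Σ_f = {τ : τᵀ(Bv) = f·v for all v ∈ V₀}`. -/
def SigmaF {N M : ℕ} (B : (Fin N → ℝ) →ₗ[ℝ] (Fin M → ℝ))
    (V₀ : Submodule ℝ (Fin N → ℝ)) (f : Fin N → ℝ) : Set (Fin M → ℝ) :=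
  {τ | ∀ v ∈ V₀, (∑ α, τ α * B v α) = ∑ i, f i * v i}

/-- Quotient `(φ*)'(w_α⁻¹|t|)/|t|`, interpreted at `t = 0` as the prescribed
right limit `L_α`. -/
def quotW (φ' : ℝ → ℝ) (wα Lα t : ℝ) : ℝ :=
  if t = 0 then Lα else rcInv φ' (wα⁻¹ * |t|) / |t|

/-!
Write `A(r) = a(r) r` with `a(r) = φ'(|r|)/|r|` for the derivative of `r ↦ φ(|r|)`. Uniform
convexity together with the monotonicity of `φ'(t)/t` traps the Bregman divergence of
`r ↦ φ(|r|)` between two parabolas: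
`(c₁/2) a(r) (p - r)² ≤ D(p, r) ≤ (C₁ C_φ/2) (p - r)²`.

Every flux is of the form `τ = w A(r)`, and by Legendre duality both energy gaps are Bregman
divergences. With `x = B u_g`, `y = B u_g^{n+1}` and `σⁿ = w A(r)` they satisfy
`J(u_g^{n+1}) - J(u_g) = ∑ w D(y, x)` and `J*(σⁿ) - J*(σ) ≥ ∑ w D(x, r)`. In these variables an IRLS
step reads `σⁿ⁺¹ = w a(r) y`, so that `y` is the best approximation of `r` among the admissible
gradients in the norm weighted by `w a(r)`, whence `∑ w a(r) (y - x)² ≤ ∑ w a(r) (x - r)²`.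
Inserting the two parabolas and `a(r) ≥ c_φ` gives the estimate with `C = C₁/c₁`.
-/

theorem mul_sq_le_intervalIntegral {G : ℝ → ℝ} {k t q : ℝ}
    (hG : IntervalIntegrable G volume t q)
    (hk : ∀ s ∈ uIcc t q, k * (s - t) ^ 2 ≤ G s * (s - t)) :
    k / 2 * (q - t) ^ 2 ≤ ∫ s in t..q, G s := by
  have hlin (a b : ℝ) : IntervalIntegrable (fun s ↦ k * (s - t)) volume a b :=
    Continuous.intervalIntegrable (by fun_prop) _ _
  have hparabola : ∫ s in t..q, k * (s - t) = k / 2 * (q - t) ^ 2 := by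
    rw [intervalIntegral.integral_const_mul,
      intervalIntegral.integral_comp_sub_right (fun s ↦ s), integral_id]
    ring
  rw [← hparabola]
  rcases le_total t q with htq | hqt
  · refine intervalIntegral.integral_mono_on_of_le_Ioo htq (hlin t q) hG fun s hs ↦ ?_
    have hks := hk s (uIcc_of_le htq ▸ Ioo_subset_Icc_self hs)
    exact le_of_mul_le_mul_right (by linarith) (sub_pos.2 hs.1)
  · rw [intervalIntegral.integral_symm q t, intervalIntegral.integral_symm q t, neg_le_neg_iff]
    refine intervalIntegral.integral_mono_on_of_le_Ioo hqt hG.symm (hlin q t) fun s hs ↦ ?_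
    have hks := hk s (uIcc_of_ge hqt ▸ Ioo_subset_Icc_self hs)
    exact le_of_mul_le_mul_right (by linarith) (sub_pos.2 hs.2)

theorem intervalIntegral_le_mul_sq {G : ℝ → ℝ} {k t q : ℝ}
    (hG : IntervalIntegrable G volume t q)
    (hk : ∀ s ∈ uIcc t q, G s * (s - t) ≤ k * (s - t) ^ 2) :
    ∫ s in t..q, G s ≤ k / 2 * (q - t) ^ 2 := by
  have hneg := mul_sq_le_intervalIntegral (k := -k) hG.neg fun s hs ↦ by
    simp only [Pi.neg_apply]
    linarith [hk s hs]
  simp only [Pi.neg_apply, intervalIntegral.integral_neg] at hneg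
  linarith

theorem sq_sub_eq_sq_abs_sub_abs_add (p r : ℝ) :
    (p - r) ^ 2 = (|p| - |r|) ^ 2 + 2 * (|p| * |r| - p * r) := by
  linear_combination -sq_abs p - sq_abs r

theorem mul_le_abs_mul_abs (p r : ℝ) : p * r ≤ |p| * |r| :=
  (le_abs_self _).trans_eq (abs_mul p r)

theorem rcInv_apply_of_strictMonoOn_s15 {ψ : ℝ → ℝ} (hψ : StrictMonoOn ψ (Ici 0)) {t : ℝ}
    (ht : 0 ≤ t) : rcInv ψ (ψ t) = t :=
  IsGreatest.csSup_eq ⟨⟨ht, le_rfl⟩, fun _ hs ↦ (hψ.le_iff_le hs.1 ht).1 hs.2⟩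

theorem sum_mul_sq_sub_le_of_orthogonal {ι : Type*} [Fintype ι] {ω x y r : ι → ℝ}
    (hω : ∀ α, 0 ≤ ω α) (horth : ∑ α, ω α * (y α - r α) * (y α - x α) = 0) :
    ∑ α, ω α * (y α - x α) ^ 2 ≤ ∑ α, ω α * (x α - r α) ^ 2 := by
  have hpythagoras : ∑ α, ω α * (x α - r α) ^ 2 =
      ∑ α, ω α * (y α - x α) ^ 2 + ∑ α, ω α * (y α - r α) ^ 2
        - 2 * ∑ α, ω α * (y α - r α) * (y α - x α) := by
    rw [Finset.mul_sum, ← Finset.sum_add_distrib, ← Finset.sum_sub_distrib]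
    exact Finset.sum_congr rfl fun α _ ↦ by ring
  rw [hpythagoras, horth]
  linarith [Finset.sum_nonneg fun α (_ : α ∈ Finset.univ) ↦
    mul_nonneg (hω α) (sq_nonneg (y α - r α))]

theorem Aphi_of_nonneg {ψ : ℝ → ℝ} (hψ : ψ 0 = 0) {t : ℝ} (ht : 0 ≤ t) : Aphi ψ t = ψ t := by
  rcases ht.eq_or_lt with rfl | ht
  · simp [Aphi, hψ]
  · simp [Aphi, ht.ne', abs_of_pos ht]

theorem Aphi_neg (ψ : ℝ → ℝ) (r : ℝ) : Aphi ψ (-r) = -Aphi ψ r := by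
  by_cases hr : r = 0 <;> simp [Aphi, hr]

/-- The flux `w A(x)` of a gradient `x`, i.e. the derivative of `x ↦ ∑ w φ(|x|)`. -/
def flux {ι : Type*} (w : ι → ℝ) (φ' : ℝ → ℝ) (x : ι → ℝ) (α : ι) : ℝ := w α * Aphi φ' (x α)

/-- The IRLS weight `a(r) = φ'(|r|)/|r|`, with a prescribed value `a₀` at `r = 0`. -/
def quotWeight (φ' : ℝ → ℝ) (a₀ r : ℝ) : ℝ := if r = 0 then a₀ else φ' |r| / |r|

theorem quotWeight_abs (φ' : ℝ → ℝ) (a₀ r : ℝ) : quotWeight φ' a₀ |r| = quotWeight φ' a₀ r := by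
  simp [quotWeight]

theorem quotWeight_mul_self (φ' : ℝ → ℝ) (a₀ r : ℝ) : quotWeight φ' a₀ r * r = Aphi φ' r := by
  by_cases hr : r = 0 <;> simp [quotWeight, Aphi, hr]

/-- The Bregman divergence of `r ↦ φ(|r|)`, whose derivative is `Aphi φ'`. -/
def bregmanDiv (φ φ' : ℝ → ℝ) (p r : ℝ) : ℝ := φ |p| - φ |r| - Aphi φ' r * (p - r)

theorem bregmanDiv_eq_bregmanDiv_abs_add (φ φ' : ℝ → ℝ) (a₀ p r : ℝ) :
    bregmanDiv φ φ' p r =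
      bregmanDiv φ φ' |p| |r| + quotWeight φ' a₀ r * (|p| * |r| - p * r) := by
  simp only [bregmanDiv, ← quotWeight_mul_self φ' a₀, quotWeight_abs, abs_abs]
  linear_combination -quotWeight φ' a₀ r * sq_abs r

namespace IsNFunction

variable {φ φ' : ℝ → ℝ}

theorem abs_Aphi (h : IsNFunction φ φ') (r : ℝ) : |Aphi φ' r| = φ' |r| := by
  have hAphi_abs := Aphi_of_nonneg h.deriv_zero (abs_nonneg r)
  have hnonneg := h.deriv_nonneg |r| (abs_nonneg r)
  rcases abs_choice r with hr | hr
  · rw [hr] at hAphi_abs hnonneg ⊢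
    rw [hAphi_abs, abs_of_nonneg hnonneg]
  · rw [hr, Aphi_neg] at hAphi_abs
    rw [← abs_neg, hAphi_abs, ← hr, abs_of_nonneg hnonneg]

theorem Aphi_mul_self (h : IsNFunction φ φ') (r : ℝ) : Aphi φ' r * r = φ' |r| * |r| := by
  rw [← Aphi_of_nonneg h.deriv_zero (abs_nonneg r), ← quotWeight_mul_self φ' 0,
    ← quotWeight_mul_self φ' 0, quotWeight_abs, mul_assoc, mul_assoc, abs_mul_abs_self]

theorem intervalIntegrable_deriv (h : IsNFunction φ φ') {a b : ℝ} (ha : 0 ≤ a) (hb : 0 ≤ b) :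
    IntervalIntegrable φ' volume a b :=
  (h.deriv_monotoneOn.mono fun _ hx ↦ (le_min ha hb).trans hx.1).intervalIntegrable

theorem intervalIntegrable_deriv_sub (h : IsNFunction φ φ') {t q : ℝ} (ht : 0 ≤ t)
    (hq : 0 ≤ q) : IntervalIntegrable (fun s ↦ φ' s - φ' t) volume t q :=
  (h.intervalIntegrable_deriv ht hq).sub intervalIntegrable_const

theorem bregmanDiv_eq_integral (h : IsNFunction φ φ') {q t : ℝ} (hq : 0 ≤ q) (ht : 0 ≤ t) :
    bregmanDiv φ φ' q t = ∫ s in t..q, (φ' s - φ' t) := by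
  rw [intervalIntegral.integral_sub (h.intervalIntegrable_deriv ht hq) intervalIntegrable_const,
    intervalIntegral.integral_const, bregmanDiv, abs_of_nonneg hq, abs_of_nonneg ht,
    Aphi_of_nonneg h.deriv_zero ht, h.eq_integral q hq, h.eq_integral t ht,
    intervalIntegral.integral_interval_sub_left (h.intervalIntegrable_deriv le_rfl hq)
      (h.intervalIntegrable_deriv le_rfl ht), smul_eq_mul, mul_comm (φ' t)]

theorem bregmanDiv_nonneg (h : IsNFunction φ φ') {q t : ℝ} (hq : 0 ≤ q) (ht : 0 ≤ t) :
    0 ≤ bregmanDiv φ φ' q t := by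
  rw [h.bregmanDiv_eq_integral hq ht]
  have hmono : ∀ s ∈ uIcc t q, 0 * (s - t) ^ 2 ≤ (φ' s - φ' t) * (s - t) := by
    intro s hs
    have hs0 : 0 ≤ s := (le_min ht hq).trans hs.1
    rw [zero_mul]
    rcases le_total t s with hts | hst
    · exact mul_nonneg (sub_nonneg.2 (h.deriv_monotoneOn ht hs0 hts)) (sub_nonneg.2 hts)
    · exact mul_nonneg_of_nonpos_of_nonpos (sub_nonpos.2 (h.deriv_monotoneOn hs0 ht hst))
        (sub_nonpos.2 hst)
  simpa using mul_sq_le_intervalIntegral (h.intervalIntegrable_deriv_sub ht hq) hmono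

theorem fenchelConj_deriv (h : IsNFunction φ φ') {t : ℝ} (ht : 0 ≤ t) :
    fenchelConj φ (φ' t) = φ' t * t - φ t := by
  refine IsGreatest.csSup_eq ⟨⟨t, ht, rfl⟩, ?_⟩
  rintro _ ⟨s, hs, rfl⟩
  have hyoung := h.bregmanDiv_nonneg hs ht
  rw [bregmanDiv, abs_of_nonneg hs, abs_of_nonneg ht, Aphi_of_nonneg h.deriv_zero ht] at hyoung
  linarith

theorem fenchelConj_abs_Aphi (h : IsNFunction φ φ') (r : ℝ) :
    fenchelConj φ |Aphi φ' r| = Aphi φ' r * r - φ |r| := by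
  rw [h.abs_Aphi, h.fenchelConj_deriv (abs_nonneg r), h.Aphi_mul_self]

end IsNFunction

/-- The paper's hypothesis that `t ↦ φ'(t)/t` is non-decreasing, with limit `cφ > 0` at `0` and
finite limit `Cφ` at infinity. -/
structure HasMonotoneQuotient (φ' : ℝ → ℝ) (cφ Cφ : ℝ) : Prop where
  quotient_mono : ∀ t T : ℝ, 0 < t → t ≤ T → φ' t / t ≤ φ' T / T
  lower_pos : 0 < cφ
  tendsto_zero : Tendsto (fun t : ℝ ↦ φ' t / t) (𝓝[>] 0) (𝓝 cφ)
  tendsto_atTop : Tendsto (fun T : ℝ ↦ φ' T / T) atTop (𝓝 Cφ)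

namespace HasMonotoneQuotient

variable {φ' : ℝ → ℝ} {cφ Cφ : ℝ}

theorem le_quotient (h : HasMonotoneQuotient φ' cφ Cφ) {t : ℝ} (ht : 0 < t) : cφ ≤ φ' t / t := by
  refine le_of_tendsto h.tendsto_zero ?_
  filter_upwards [Ioo_mem_nhdsGT ht] with s hs
  exact h.quotient_mono s t hs.1 hs.2.le

theorem quotient_le (h : HasMonotoneQuotient φ' cφ Cφ) {t : ℝ} (ht : 0 < t) : φ' t / t ≤ Cφ :=
  ge_of_tendsto h.tendsto_atTop ((eventually_ge_atTop t).mono (h.quotient_mono t · ht))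

theorem lower_le_upper (h : HasMonotoneQuotient φ' cφ Cφ) : cφ ≤ Cφ :=
  (h.le_quotient one_pos).trans (h.quotient_le one_pos)

theorem upper_pos (h : HasMonotoneQuotient φ' cφ Cφ) : 0 < Cφ :=
  h.lower_pos.trans_le h.lower_le_upper

theorem le_quotWeight (h : HasMonotoneQuotient φ' cφ Cφ) (r : ℝ) : cφ ≤ quotWeight φ' cφ r := by
  unfold quotWeight
  split_ifs with hr
  exacts [le_rfl, h.le_quotient (abs_pos.2 hr)]

theorem quotWeight_pos (h : HasMonotoneQuotient φ' cφ Cφ) (r : ℝ) : 0 < quotWeight φ' cφ r :=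
  h.lower_pos.trans_le (h.le_quotWeight r)

theorem quotWeight_le (h : HasMonotoneQuotient φ' cφ Cφ) (r : ℝ) : quotWeight φ' cφ r ≤ Cφ := by
  unfold quotWeight
  split_ifs with hr
  exacts [h.lower_le_upper, h.quotient_le (abs_pos.2 hr)]

theorem quotWeight_le_quotient (h : HasMonotoneQuotient φ' cφ Cφ) {t s : ℝ} (hts : |t| ≤ s)
    (hs : 0 < s) : quotWeight φ' cφ t ≤ φ' s / s := by
  unfold quotWeight
  split_ifs with ht
  exacts [h.le_quotient hs, h.quotient_mono _ _ (abs_pos.2 ht) hts]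

end HasMonotoneQuotient

/-- Uniformly convex N-functions, with uniform convexity constants `c₁` and `C₁`. -/
structure IsUniformlyConvexNFunction (φ φ' : ℝ → ℝ) (c₁ C₁ : ℝ) : Prop
    extends IsNFunction φ φ' where
  lower_pos : 0 < c₁
  slope_bounds : ∀ t s : ℝ, 0 ≤ t → t < s →
    c₁ * (φ' s / s) ≤ (φ' t - φ' s) / (t - s) ∧ (φ' t - φ' s) / (t - s) ≤ C₁ * (φ' s / s)

namespace IsUniformlyConvexNFunction

variable {φ φ' : ℝ → ℝ} {c₁ C₁ cφ Cφ : ℝ}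

theorem deriv_sub_mul_sub_mem_Icc (h : IsUniformlyConvexNFunction φ φ' c₁ C₁) {t s : ℝ}
    (ht : 0 ≤ t) (hs : 0 ≤ s) :
    (φ' s - φ' t) * (s - t) ∈ Icc (c₁ * (φ' (max t s) / max t s) * (s - t) ^ 2)
      (C₁ * (φ' (max t s) / max t s) * (s - t) ^ 2) := by
  wlog hts : t ≤ s generalizing t s
  · have hst := this hs ht (le_of_not_ge hts)
    rwa [max_comm, ← neg_sub s t, ← neg_sub (φ' s), neg_mul_neg, neg_sq] at hst
  rcases hts.eq_or_lt with rfl | hlt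
  · simp
  have hslope := h.slope_bounds t s ht hlt
  have hsecant : (φ' s - φ' t) * (s - t) = (φ' t - φ' s) / (t - s) * (s - t) ^ 2 := by
    have : t - s ≠ 0 := (sub_neg.2 hlt).ne
    field_simp
    ring
  rw [max_eq_right hts, hsecant]
  exact ⟨mul_le_mul_of_nonneg_right hslope.1 (sq_nonneg _),
    mul_le_mul_of_nonneg_right hslope.2 (sq_nonneg _)⟩

theorem le_one (h : IsUniformlyConvexNFunction φ φ' c₁ C₁) : c₁ ≤ 1 := by
  have hslope := (h.deriv_sub_mul_sub_mem_Icc le_rfl zero_le_one).1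
  simp only [h.deriv_zero, zero_le_one, sup_of_le_right, div_one, sub_zero, mul_one, one_pow]
    at hslope
  exact (mul_le_iff_le_one_left (h.deriv_pos 1 one_pos)).1 hslope

theorem one_le (h : IsUniformlyConvexNFunction φ φ' c₁ C₁) : 1 ≤ C₁ := by
  have hslope := (h.deriv_sub_mul_sub_mem_Icc le_rfl zero_le_one).2
  simp only [h.deriv_zero, zero_le_one, sup_of_le_right, div_one, sub_zero, mul_one, one_pow]
    at hslope
  exact (le_mul_iff_one_le_left (h.deriv_pos 1 one_pos)).1 hslope

theorem upper_pos (h : IsUniformlyConvexNFunction φ φ' c₁ C₁) : 0 < C₁ :=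
  one_pos.trans_le h.one_le

theorem mul_sq_le_deriv_sub_mul_sub (h : IsUniformlyConvexNFunction φ φ' c₁ C₁)
    (hq : HasMonotoneQuotient φ' cφ Cφ) {t s : ℝ} (ht : 0 ≤ t) (hs : 0 ≤ s) :
    c₁ * quotWeight φ' cφ t * (s - t) ^ 2 ≤ (φ' s - φ' t) * (s - t) := by
  rcases eq_or_ne t s with rfl | hne
  · simp
  have hmax : 0 < max t s := (le_min ht hs).trans_lt (min_lt_max.2 hne)
  have hweight := hq.quotWeight_le_quotient ((abs_of_nonneg ht).trans_le (le_max_left t s)) hmax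
  have hc₁ := h.lower_pos.le
  exact le_trans (by gcongr) (h.deriv_sub_mul_sub_mem_Icc ht hs).1

theorem deriv_sub_mul_sub_le_mul_sq (h : IsUniformlyConvexNFunction φ φ' c₁ C₁)
    (hq : HasMonotoneQuotient φ' cφ Cφ) {t s : ℝ} (ht : 0 ≤ t) (hs : 0 ≤ s) :
    (φ' s - φ' t) * (s - t) ≤ C₁ * Cφ * (s - t) ^ 2 := by
  rcases eq_or_ne t s with rfl | hne
  · simp
  have hmax : 0 < max t s := (le_min ht hs).trans_lt (min_lt_max.2 hne)
  have hquotient := hq.quotient_le hmax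
  have hC₁ := h.upper_pos.le
  exact (h.deriv_sub_mul_sub_mem_Icc ht hs).2.trans (by gcongr)

theorem strictMonoOn_deriv (h : IsUniformlyConvexNFunction φ φ' c₁ C₁) :
    StrictMonoOn φ' (Ici 0) := by
  intro t (ht : 0 ≤ t) s (hs : 0 ≤ s) hts
  have hs0 : 0 < s := ht.trans_lt hts
  have hpos : 0 < c₁ * (φ' s / s) * (s - t) ^ 2 :=
    mul_pos (mul_pos h.lower_pos (div_pos (h.deriv_pos s hs0) hs0)) (pow_pos (sub_pos.2 hts) 2)
  have hslope := (h.deriv_sub_mul_sub_mem_Icc ht hs).1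
  rw [max_eq_right hts.le] at hslope
  exact sub_pos.1 (pos_of_mul_pos_left (hpos.trans_le hslope) (sub_pos.2 hts).le)

theorem lipschitzOnWith_deriv (h : IsUniformlyConvexNFunction φ φ' c₁ C₁)
    (hq : HasMonotoneQuotient φ' cφ Cφ) :
    LipschitzOnWith (C₁ * Cφ).toNNReal φ' (Ici 0) := by
  refine LipschitzOnWith.of_le_add_mul' _ fun s (hs : 0 ≤ s) t (ht : 0 ≤ t) ↦ ?_
  have hCC := mul_pos h.upper_pos hq.upper_pos
  rw [Real.dist_eq]
  rcases le_or_gt s t with hst | hts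
  · linarith [h.deriv_monotoneOn hs ht hst, mul_nonneg hCC.le (abs_nonneg (s - t))]
  · have hslope := h.deriv_sub_mul_sub_le_mul_sq hq ht hs
    rw [sq, ← mul_assoc] at hslope
    rw [abs_of_pos (sub_pos.2 hts)]
    linarith [le_of_mul_le_mul_right hslope (sub_pos.2 hts)]

theorem exists_deriv_eq (h : IsUniformlyConvexNFunction φ φ' c₁ C₁)
    (hq : HasMonotoneQuotient φ' cφ Cφ) {y : ℝ} (hy : 0 ≤ y) : ∃ t, 0 ≤ t ∧ φ' t = y := by
  obtain ⟨T, hyT, hT⟩ := ((h.deriv_tendsto_atTop.eventually_ge_atTop y).and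
    (eventually_ge_atTop 0)).exists
  obtain ⟨t, ht, rfl⟩ := intermediate_value_Icc hT
    ((h.lipschitzOnWith_deriv hq).continuousOn.mono Icc_subset_Ici_self)
    ⟨h.deriv_zero.trans_le hy, hyT⟩
  exact ⟨t, ht.1, rfl⟩

theorem Aphi_surjective (h : IsUniformlyConvexNFunction φ φ' c₁ C₁)
    (hq : HasMonotoneQuotient φ' cφ Cφ) : Function.Surjective (Aphi φ') := by
  intro y
  obtain ⟨t, ht, hty⟩ := h.exists_deriv_eq hq (abs_nonneg y)
  rw [← Aphi_of_nonneg h.deriv_zero ht] at hty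
  rcases abs_choice y with hy | hy
  · exact ⟨t, hty.trans hy⟩
  · exact ⟨-t, by rw [Aphi_neg, hty, hy, neg_neg]⟩

theorem mul_sq_le_bregmanDiv (h : IsUniformlyConvexNFunction φ φ' c₁ C₁)
    (hq : HasMonotoneQuotient φ' cφ Cφ) (p r : ℝ) :
    c₁ / 2 * (quotWeight φ' cφ r * (p - r) ^ 2) ≤ bregmanDiv φ φ' p r := by
  have habs : c₁ * quotWeight φ' cφ r / 2 * (|p| - |r|) ^ 2 ≤ bregmanDiv φ φ' |p| |r| := by
    rw [h.bregmanDiv_eq_integral (abs_nonneg p) (abs_nonneg r), ← quotWeight_abs]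
    exact mul_sq_le_intervalIntegral
      (h.intervalIntegrable_deriv_sub (abs_nonneg r) (abs_nonneg p)) fun s hs ↦
        h.mul_sq_le_deriv_sub_mul_sub hq (abs_nonneg r)
          ((le_min (abs_nonneg r) (abs_nonneg p)).trans hs.1)
  have hangle : c₁ * (quotWeight φ' cφ r * (|p| * |r| - p * r)) ≤
      quotWeight φ' cφ r * (|p| * |r| - p * r) :=
    mul_le_of_le_one_left
      (mul_nonneg (hq.quotWeight_pos r).le (sub_nonneg.2 (mul_le_abs_mul_abs p r))) h.le_one
  rw [bregmanDiv_eq_bregmanDiv_abs_add φ φ' cφ, sq_sub_eq_sq_abs_sub_abs_add]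
  linarith

theorem bregmanDiv_le_mul_sq (h : IsUniformlyConvexNFunction φ φ' c₁ C₁)
    (hq : HasMonotoneQuotient φ' cφ Cφ) (p r : ℝ) :
    bregmanDiv φ φ' p r ≤ C₁ * Cφ / 2 * (p - r) ^ 2 := by
  have habs : bregmanDiv φ φ' |p| |r| ≤ C₁ * Cφ / 2 * (|p| - |r|) ^ 2 := by
    rw [h.bregmanDiv_eq_integral (abs_nonneg p) (abs_nonneg r)]
    exact intervalIntegral_le_mul_sq
      (h.intervalIntegrable_deriv_sub (abs_nonneg r) (abs_nonneg p)) fun s hs ↦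
        h.deriv_sub_mul_sub_le_mul_sq hq (abs_nonneg r)
          ((le_min (abs_nonneg r) (abs_nonneg p)).trans hs.1)
  have hangle : quotWeight φ' cφ r * (|p| * |r| - p * r) ≤ C₁ * Cφ * (|p| * |r| - p * r) :=
    mul_le_mul_of_nonneg_right
      ((hq.quotWeight_le r).trans (le_mul_of_one_le_left hq.upper_pos.le h.one_le))
      (sub_nonneg.2 (mul_le_abs_mul_abs p r))
  rw [bregmanDiv_eq_bregmanDiv_abs_add φ φ' cφ, sq_sub_eq_sq_abs_sub_abs_add]
  linarith

theorem limit_mul_eq_one_of_tendsto_rcInv_div (h : IsUniformlyConvexNFunction φ φ' c₁ C₁)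
    (hcφ : 0 < cφ) (hlim : Tendsto (fun t : ℝ ↦ φ' t / t) (𝓝[>] 0) (𝓝 cφ)) {w L : ℝ} (hw : 0 < w)
    (hL : Tendsto (fun t : ℝ ↦ rcInv φ' (w⁻¹ * t) / t) (𝓝[>] 0) (𝓝 L)) :
    L * (w * cφ) = 1 := by
  have hsubst : Tendsto (fun s ↦ w * φ' s) (𝓝[>] 0) (𝓝[>] 0) := by
    refine tendsto_nhdsWithin_iff.2 ⟨?_, ?_⟩
    · simpa [h.deriv_zero] using (h.deriv_rightContinuous 0 le_rfl).const_mul w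
    · filter_upwards [self_mem_nhdsWithin] with s hs
      exact mul_pos hw (h.deriv_pos s hs)
  have hinv : Tendsto (fun s ↦ (w * (φ' s / s))⁻¹) (𝓝[>] 0) (𝓝 (w * cφ)⁻¹) :=
    (hlim.const_mul w).inv₀ (mul_pos hw hcφ).ne'
  have hL_eq : L = (w * cφ)⁻¹ := by
    refine tendsto_nhds_unique ((hL.comp hsubst).congr' ?_) hinv
    filter_upwards [self_mem_nhdsWithin] with s (hs : 0 < s)
    rw [Function.comp_apply, inv_mul_cancel_left₀ hw.ne',
      rcInv_apply_of_strictMonoOn_s15 h.strictMonoOn_deriv hs.le, ← mul_div_assoc, inv_div]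
  rw [hL_eq, inv_mul_cancel₀ (mul_pos hw hcφ).ne']

theorem quotW_mul_quotWeight_eq_one (h : IsUniformlyConvexNFunction φ φ' c₁ C₁)
    (hcφ : 0 < cφ) (hlim : Tendsto (fun t : ℝ ↦ φ' t / t) (𝓝[>] 0) (𝓝 cφ)) {w L : ℝ} (hw : 0 < w)
    (hL : Tendsto (fun t : ℝ ↦ rcInv φ' (w⁻¹ * t) / t) (𝓝[>] 0) (𝓝 L)) (r : ℝ) :
    quotW φ' w L (w * Aphi φ' r) * (w * quotWeight φ' cφ r) = 1 := by
  by_cases hr : r = 0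
  · simpa [hr, quotW, quotWeight, Aphi] using h.limit_mul_eq_one_of_tendsto_rcInv_div hcφ hlim hw hL
  · have hr_abs := abs_pos.2 hr
    have hderiv := h.deriv_pos _ hr_abs
    have hA : |w * Aphi φ' r| = w * φ' |r| := by rw [abs_mul, abs_of_pos hw, h.abs_Aphi]
    have hA0 : w * Aphi φ' r ≠ 0 := abs_pos.1 (hA ▸ mul_pos hw hderiv)
    rw [quotW, if_neg hA0, hA, inv_mul_cancel_left₀ hw.ne',
      rcInv_apply_of_strictMonoOn_s15 h.strictMonoOn_deriv hr_abs.le, quotWeight, if_neg hr]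
    field_simp

theorem exists_eq_flux (h : IsUniformlyConvexNFunction φ φ' c₁ C₁)
    (hq : HasMonotoneQuotient φ' cφ Cφ) {ι : Type*} {w : ι → ℝ} (hw : ∀ α, w α ≠ 0) (σ : ι → ℝ) :
    ∃ x, σ = flux w φ' x := by
  choose x hx using fun α ↦ h.Aphi_surjective hq ((w α)⁻¹ * σ α)
  exact ⟨x, funext fun α ↦ by rw [flux, hx, mul_inv_cancel_left₀ (hw α)]⟩

theorem eq_mul_of_irls (h : IsUniformlyConvexNFunction φ φ' c₁ C₁)
    (hcφ : 0 < cφ) (hlim : Tendsto (fun t : ℝ ↦ φ' t / t) (𝓝[>] 0) (𝓝 cφ)) {ι : Type*} [Fintype ι]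
    {w L : ι → ℝ} (hw : ∀ α, 0 < w α)
    (hL : ∀ α, Tendsto (fun t : ℝ ↦ rcInv φ' ((w α)⁻¹ * t) / t) (𝓝[>] 0) (𝓝 (L α)))
    {r σ y : ι → ℝ}
    (hirls : ∀ τ : ι → ℝ,
      ∑ α, quotW φ' (w α) (L α) (flux w φ' r α) * σ α * τ α - ∑ α, τ α * y α = 0) (α : ι) :
    σ α = w α * quotWeight φ' cφ (r α) * y α := by
  have hy : (fun α ↦ quotW φ' (w α) (L α) (flux w φ' r α) * σ α) = y :=
    dotProduct_eq _ _ fun τ ↦ (sub_eq_zero.1 (hirls τ)).trans (dotProduct_comm τ y)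
  have hinv := h.quotW_mul_quotWeight_eq_one hcφ hlim (hw α) (hL α) (r α)
  rw [← congrFun hy α, flux]
  linear_combination -σ α * hinv

end IsUniformlyConvexNFunction

section Energies

variable {ι E : Type*} [Fintype ι] [AddCommGroup E] [Module ℝ E]

/-- The primal energy `J` on an arbitrary real vector space, with a linear load `ℓ` in place of
`v ↦ f · v`. -/
def primalEnergy (w : ι → ℝ) (φ : ℝ → ℝ) (B : E →ₗ[ℝ] ι → ℝ) (ℓ : E →ₗ[ℝ] ℝ) (v : E) : ℝ :=
  ∑ α, w α * φ |B v α| - ℓ v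

/-- The dual energy `J*` with dual integrand `ψ`, where `b` stands for `B g`. -/
def dualEnergy (w : ι → ℝ) (ψ : ℝ → ℝ) (b τ : ι → ℝ) : ℝ :=
  ∑ α, w α * ψ ((w α)⁻¹ * |τ α|) - τ ⬝ᵥ b

/-- The dual constraint set `Σ_f` for a load `ℓ`. -/
def admissibleFluxes (B : E →ₗ[ℝ] ι → ℝ) (V₀ : Submodule ℝ E) (ℓ : E →ₗ[ℝ] ℝ) : Set (ι → ℝ) :=
  {τ | ∀ v ∈ V₀, τ ⬝ᵥ B v = ℓ v}

variable {φ φ' : ℝ → ℝ} {c₁ C₁ cφ Cφ K : ℝ} {w : ι → ℝ} {B : E →ₗ[ℝ] ι → ℝ} {V₀ : Submodule ℝ E}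
  {ℓ : E →ₗ[ℝ] ℝ}

theorem sub_dotProduct_map_sub_eq_zero {σ τ : ι → ℝ} (hσ : σ ∈ admissibleFluxes B V₀ ℓ)
    (hτ : τ ∈ admissibleFluxes B V₀ ℓ) {x y : E} (hxy : x - y ∈ V₀) :
    (σ - τ) ⬝ᵥ (B x - B y) = 0 := by
  rw [← map_sub, sub_dotProduct, hσ _ hxy, hτ _ hxy, sub_self]

theorem primalEnergy_sub_eq (φ φ' : ℝ → ℝ) (w : ι → ℝ) (B : E →ₗ[ℝ] ι → ℝ) (ℓ : E →ₗ[ℝ] ℝ)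
    (x y : E) :
    primalEnergy w φ B ℓ y - primalEnergy w φ B ℓ x =
      ∑ α, w α * bregmanDiv φ φ' (B y α) (B x α) + (flux w φ' (B x) ⬝ᵥ B (y - x) - ℓ (y - x)) := by
  simp only [primalEnergy, bregmanDiv, flux, dotProduct, map_sub, Pi.sub_apply, mul_sub,
    Finset.sum_sub_distrib, mul_assoc]
  ring

theorem primalEnergy_sub_le (hw : ∀ α, 0 ≤ w α)
    (hK : ∀ p r, bregmanDiv φ φ' p r ≤ K * (p - r) ^ 2) (x y : E) :
    primalEnergy w φ B ℓ y - primalEnergy w φ B ℓ x ≤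
      K * ∑ α, w α * (B y α - B x α) ^ 2 + (flux w φ' (B x) ⬝ᵥ B (y - x) - ℓ (y - x)) := by
  rw [primalEnergy_sub_eq φ φ', Finset.mul_sum]
  simp only [mul_left_comm K]
  gcongr with α
  exacts [hw α, hK _ _]

theorem primalEnergy_sub_le_of_flux_mem (hw : ∀ α, 0 ≤ w α)
    (hK : ∀ p r, bregmanDiv φ φ' p r ≤ K * (p - r) ^ 2) {x y : E}
    (hflux : flux w φ' (B x) ∈ admissibleFluxes B V₀ ℓ) (hxy : y - x ∈ V₀) :
    primalEnergy w φ B ℓ y - primalEnergy w φ B ℓ x ≤ K * ∑ α, w α * (B y α - B x α) ^ 2 := by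
  have hgap := primalEnergy_sub_le (B := B) (ℓ := ℓ) hw hK x y
  rwa [hflux _ hxy, sub_self, add_zero] at hgap

/-- Moving by `t • v` changes the energy by at most a quadratic in `t` whose linear
coefficient is the residual, so minimality forces the residual to vanish. -/
theorem flux_mem_admissibleFluxes_of_isMinOn (hw : ∀ α, 0 ≤ w α)
    (hK : ∀ p r, bregmanDiv φ φ' p r ≤ K * (p - r) ^ 2) {u g : E} (hu : u ∈ V₀)
    (hmin : IsMinOn (fun v ↦ primalEnergy w φ B ℓ (v + g)) V₀ u) :
    flux w φ' (B (u + g)) ∈ admissibleFluxes B V₀ ℓ := by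
  intro v hv
  have hquadratic (t : ℝ) : 0 ≤ (K * ∑ α, w α * B v α ^ 2) * (t * t) +
      (flux w φ' (B (u + g)) ⬝ᵥ B v - ℓ v) * t + 0 := by
    have hstep := isMinOn_iff.1 hmin (u + t • v) (V₀.add_mem hu (V₀.smul_mem t hv))
    have hgap := primalEnergy_sub_le (B := B) (ℓ := ℓ) hw hK (u + g) (u + t • v + g)
    have hdir : u + t • v + g - (u + g) = t • v := by abel
    have hsum : ∑ α, w α * (B (u + t • v + g) α - B (u + g) α) ^ 2 =
        (∑ α, w α * B v α ^ 2) * (t * t) := by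
      rw [Finset.sum_mul]
      refine Finset.sum_congr rfl fun α _ ↦ ?_
      rw [← Pi.sub_apply, ← map_sub, hdir, map_smul, Pi.smul_apply, smul_eq_mul]
      ring
    rw [hsum, hdir, map_smul, map_smul, dotProduct_smul, smul_eq_mul, smul_eq_mul] at hgap
    linarith
  have hdiscrim := discrim_le_zero hquadratic
  rw [discrim, mul_zero, sub_zero] at hdiscrim
  exact sub_eq_zero.1 (sq_eq_zero_iff.1 (hdiscrim.antisymm (sq_nonneg _)))

theorem dualEnergy_flux (hφ : IsNFunction φ φ') (hw : ∀ α, 0 < w α) (b x : ι → ℝ) :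
    dualEnergy w (fenchelConj φ) b (flux w φ' x) =
      ∑ α, w α * (Aphi φ' (x α) * x α - φ |x α|) - flux w φ' x ⬝ᵥ b := by
  unfold dualEnergy
  congr 1
  refine Finset.sum_congr rfl fun α _ ↦ ?_
  rw [flux, abs_mul, abs_of_pos (hw α), inv_mul_cancel_left₀ (hw α).ne', hφ.fenchelConj_abs_Aphi]

theorem dualEnergy_flux_sub_eq (hφ : IsNFunction φ φ') (hw : ∀ α, 0 < w α) (b x r : ι → ℝ) :
    dualEnergy w (fenchelConj φ) b (flux w φ' r) - dualEnergy w (fenchelConj φ) b (flux w φ' x) =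
      ∑ α, w α * bregmanDiv φ φ' (x α) (r α) + (flux w φ' r - flux w φ' x) ⬝ᵥ (x - b) := by
  rw [dualEnergy_flux hφ hw, dualEnergy_flux hφ hw, dotProduct_sub, sub_dotProduct, sub_dotProduct]
  simp only [bregmanDiv, flux, dotProduct, mul_sub, Finset.sum_sub_distrib, mul_assoc]
  ring

theorem mul_sum_sq_sub_le_of_orthogonal (hq : HasMonotoneQuotient φ' cφ Cφ) (hw : ∀ α, 0 ≤ w α)
    {r x y σ : ι → ℝ} (hσ : ∀ α, σ α = w α * quotWeight φ' cφ (r α) * y α)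
    (horth : (σ - flux w φ' r) ⬝ᵥ (y - x) = 0) :
    cφ * ∑ α, w α * (y α - x α) ^ 2 ≤
      ∑ α, w α * quotWeight φ' cφ (r α) * (x α - r α) ^ 2 := by
  have hgalerkin : ∑ α, w α * quotWeight φ' cφ (r α) * (y α - r α) * (y α - x α) = 0 := by
    rw [← horth]
    refine Finset.sum_congr rfl fun α _ ↦ ?_
    rw [Pi.sub_apply, Pi.sub_apply, hσ, flux, ← quotWeight_mul_self φ' cφ]
    ring
  calc cφ * ∑ α, w α * (y α - x α) ^ 2
      ≤ ∑ α, w α * quotWeight φ' cφ (r α) * (y α - x α) ^ 2 := by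
        simp only [Finset.mul_sum, mul_left_comm cφ, mul_assoc]
        gcongr with α
        exacts [hw α, hq.le_quotWeight _]
    _ ≤ ∑ α, w α * quotWeight φ' cφ (r α) * (x α - r α) ^ 2 :=
        sum_mul_sq_sub_le_of_orthogonal (fun α ↦ mul_nonneg (hw α) (hq.quotWeight_pos _).le)
          hgalerkin

theorem mul_sum_sq_sub_le_dualEnergy_flux_sub (hφ : IsUniformlyConvexNFunction φ φ' c₁ C₁)
    (hq : HasMonotoneQuotient φ' cφ Cφ) (hw : ∀ α, 0 < w α) {b x r : ι → ℝ}
    (horth : (flux w φ' r - flux w φ' x) ⬝ᵥ (x - b) = 0) :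
    c₁ / 2 * ∑ α, w α * quotWeight φ' cφ (r α) * (x α - r α) ^ 2 ≤
      dualEnergy w (fenchelConj φ) b (flux w φ' r) -
        dualEnergy w (fenchelConj φ) b (flux w φ' x) := by
  rw [dualEnergy_flux_sub_eq hφ.toIsNFunction hw, horth, add_zero, Finset.mul_sum]
  refine Finset.sum_le_sum fun α _ ↦ ?_
  rw [mul_assoc (w α), mul_left_comm]
  exact mul_le_mul_of_nonneg_left (hφ.mul_sq_le_bregmanDiv hq _ _) (hw α).le

theorem primal_energy_convergence_general (hφ : IsUniformlyConvexNFunction φ φ' c₁ C₁)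
    (hq : HasMonotoneQuotient φ' cφ Cφ) (hw : ∀ α, 0 < w α) {L : ι → ℝ}
    (hL : ∀ α, Tendsto (fun t : ℝ ↦ rcInv φ' ((w α)⁻¹ * t) / t) (𝓝[>] 0) (𝓝 (L α)))
    {g u un : E} (hu : u ∈ V₀) (hun : un ∈ V₀)
    (humin : IsMinOn (fun v ↦ primalEnergy w φ B ℓ (v + g)) V₀ u) {σ σn σn' : ι → ℝ}
    (hσmin : IsMinOn (dualEnergy w (fenchelConj φ) (B g)) (admissibleFluxes B V₀ ℓ) σ)
    (hσn : σn ∈ admissibleFluxes B V₀ ℓ) (hσn' : σn' ∈ admissibleFluxes B V₀ ℓ)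
    (hirls : ∀ τ : ι → ℝ,
      ∑ α, quotW φ' (w α) (L α) (σn α) * σn' α * τ α - ∑ α, τ α * B (un + g) α = 0) :
    primalEnergy w φ B ℓ (un + g) - primalEnergy w φ B ℓ (u + g) ≤
      C₁ / c₁ * (Cφ / cφ) * (dualEnergy w (fenchelConj φ) (B g) σn -
        dualEnergy w (fenchelConj φ) (B g) σ) := by
  obtain ⟨r, rfl⟩ := hφ.exists_eq_flux hq (fun α ↦ (hw α).ne') σn
  have hw0 α := (hw α).le
  have hdir : un + g - (u + g) ∈ V₀ := by simpa using V₀.sub_mem hun hu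
  have hupper := hφ.bregmanDiv_le_mul_sq hq
  have hflux := flux_mem_admissibleFluxes_of_isMinOn hw0 hupper hu humin
  have hσn'_eq := hφ.eq_mul_of_irls hq.lower_pos hq.tendsto_zero hw hL hirls
  have happrox := mul_sum_sq_sub_le_of_orthogonal hq hw0 hσn'_eq
    (sub_dotProduct_map_sub_eq_zero hσn' hσn hdir)
  have hdual := mul_sum_sq_sub_le_dualEnergy_flux_sub hφ hq hw
    (sub_dotProduct_map_sub_eq_zero hσn hflux (x := u + g) (y := g) (by simpa using hu))
  have hgap : c₁ * cφ / 2 * ∑ α, w α * (B (un + g) α - B (u + g) α) ^ 2 ≤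
      dualEnergy w (fenchelConj φ) (B g) (flux w φ' r) -
        dualEnergy w (fenchelConj φ) (B g) σ := by
    linarith [mul_le_mul_of_nonneg_left happrox hφ.lower_pos.le, isMinOn_iff.1 hσmin _ hflux]
  calc primalEnergy w φ B ℓ (un + g) - primalEnergy w φ B ℓ (u + g)
      ≤ C₁ * Cφ / 2 * ∑ α, w α * (B (un + g) α - B (u + g) α) ^ 2 :=
        primalEnergy_sub_le_of_flux_mem hw0 hupper hflux hdir
    _ = C₁ / c₁ * (Cφ / cφ) *
          (c₁ * cφ / 2 * ∑ α, w α * (B (un + g) α - B (u + g) α) ^ 2) := by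
        field_simp [hφ.lower_pos.ne', hq.lower_pos.ne']
    _ ≤ _ := mul_le_mul_of_nonneg_left hgap <|
        mul_nonneg (div_pos hφ.upper_pos hφ.lower_pos).le (div_pos hq.upper_pos hq.lower_pos).le

end Energies

/-- convergence of the primal variable in energy. There is a
constant `C`, depending only on the uniform convexity constants `c₁ ≤ C₁`, with
`J(u_g^{n+1}) − J(u_g) ≤ C (C_φ/c_φ)(J*(σⁿ) − J*(σ))`. -/
theorem primal_energy_convergence (c₁ C₁ : ℝ) (hc₁ : 0 < c₁) (hc₁C₁ : c₁ ≤ C₁) :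
    ∃ C : ℝ, 0 < C ∧
    ∀ (φ φ' : ℝ → ℝ), IsNFunction φ φ' →
    (∀ t s : ℝ, 0 ≤ t → t < s →
      c₁ * (φ' s / s) ≤ (φ' t - φ' s) / (t - s) ∧
      (φ' t - φ' s) / (t - s) ≤ C₁ * (φ' s / s)) →
    (∀ t T : ℝ, 0 < t → t ≤ T → φ' t / t ≤ φ' T / T) →
    ∀ (cφ Cφ : ℝ), 0 < cφ →
    Tendsto (fun t : ℝ => φ' t / t) (nhdsWithin 0 (Set.Ioi 0)) (nhds cφ) →
    Tendsto (fun T : ℝ => φ' T / T) atTop (nhds Cφ) →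
    ∀ (N M : ℕ) (B : (Fin N → ℝ) →ₗ[ℝ] (Fin M → ℝ)) (V₀ : Submodule ℝ (Fin N → ℝ)),
    (∀ v ∈ V₀, B v = 0 → v = 0) →
    ∀ (g f : Fin N → ℝ) (w : Fin M → ℝ), (∀ α, 0 < w α) →
    ∀ (L : Fin M → ℝ),
    (∀ α, Tendsto (fun t : ℝ => rcInv φ' ((w α)⁻¹ * t) / t)
      (nhdsWithin 0 (Set.Ioi 0)) (nhds (L α))) →
    -- primal minimizer u_g = u + g
    ∀ (u : Fin N → ℝ), u ∈ V₀ →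
    (∀ v ∈ V₀, primalJ w φ B f (u + g) ≤ primalJ w φ B f (v + g)) →
    -- dual minimizer σ
    ∀ σmin ∈ SigmaF B V₀ f,
    (∀ τ ∈ SigmaF B V₀ f,
      dualJ w (fenchelConj φ) B g σmin ≤ dualJ w (fenchelConj φ) B g τ) →
    -- one step of the dual IRLS scheme
    ∀ (σn σn1 : Fin M → ℝ) (un1 : Fin N → ℝ),
    σn ∈ SigmaF B V₀ f → σn1 ∈ SigmaF B V₀ f → un1 ∈ V₀ →
    (∀ τ : Fin M → ℝ,
      (∑ α, quotW φ' (w α) (L α) (σn α) * σn1 α * τ α)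
        - (∑ α, τ α * B (un1 + g) α) = 0) →
    (∀ v ∈ V₀, (∑ α, σn1 α * B v α) = ∑ i, f i * v i) →
    primalJ w φ B f (un1 + g) - primalJ w φ B f (u + g) ≤
      C * (Cφ / cφ) *
        (dualJ w (fenchelConj φ) B g σn - dualJ w (fenchelConj φ) B g σmin) :=
  ⟨C₁ / c₁, div_pos (hc₁.trans_le hc₁C₁) hc₁, fun _ _ hN huc hmono _ _ hcφ h0 hT _ _ _ _ _ _ f _ hw
    _ hL _ hu humin _ _ hσmin _ _ _ hσn hσn' hun hirls _ ↦
    primal_energy_convergence_general (ℓ := dotProductBilin ℝ ℝ f) ⟨hN, hc₁, huc⟩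
      ⟨hmono, hcφ, h0, hT⟩ hw hL hu hun (isMinOn_iff.2 humin) (isMinOn_iff.2 hσmin) hσn hσn' hirls⟩
end
end
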